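/- arXiv:2506.07780 — 3 statements merged into one kernel-verified Lean document; each statement's English description precedes it below -/
import Mathlib

section
/- Let K : ℝ → ℝ → ℝ be a smooth function of (x,t) satisfying the Kupershmidt equation K_t = K_{5x} - 5K_xK_{xxx} - 5K_{xx}² - 5K²K_{xxx} - 20KK_xK_{xx} - 5K_x³ + 5K⁴K_x. Then S := K_x - K² satisfies the Sawada-Kotera equation S_t = S_{5x} + 5SS_{xxx} + 5S_xS_{xx} + 5S²S_x. -/
/-- Total `x`-derivative of a function of `(x, t)`. -/
noncomputable def dx (f : ℝ → ℝ → ℝ) : ℝ → ℝ → ℝ := fun x t => deriv (fun y => f y t) x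

/-- Total `t`-derivative of a function of `(x, t)`. -/
noncomputable def dt (f : ℝ → ℝ → ℝ) : ℝ → ℝ → ℝ := fun x t => deriv (fun s => f x s) t

/-- The Kupershmidt equation. -/
def Kupershmidt (K : ℝ → ℝ → ℝ) : Prop :=
  ∀ x t, dt K x t =
    dx (dx (dx (dx (dx K)))) x t
    - 5 * dx K x t * dx (dx (dx K)) x t
    - 5 * (dx (dx K) x t)^2
    - 5 * (K x t)^2 * dx (dx (dx K)) x t
    - 20 * K x t * dx K x t * dx (dx K) x t
    - 5 * (dx K x t)^3
    + 5 * (K x t)^4 * dx K x t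

/-- The Sawada-Kotera equation. -/
def SawadaKotera (S : ℝ → ℝ → ℝ) : Prop :=
  ∀ x t, dt S x t =
    dx (dx (dx (dx (dx S)))) x t
    + 5 * S x t * dx (dx (dx S)) x t
    + 5 * dx S x t * dx (dx S) x t
    + 5 * (S x t)^2 * dx S x t

/-!
Let `D` be a derivation of a commutative ring and `P(k)`, `Q(s)` the differential polynomials on the
right-hand sides of the two equations. The linearization of the Miura map `M(k) = D k - k²` at `k`
is `D - 2k`, and the whole theorem rests on the differential polynomial identity
`D (P(k)) - 2k P(k) = Q(M(k))`. If `T` is a derivation with `T (D k) = D (T k)`, then applying it to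
`M(k)` gives `(D - 2k)(T k)`, so `T k = P(k)` implies `T (M(k)) = Q(M(k))`. In the ring of smooth
functions of `(x, t)` the partial derivatives are such derivations `D` and `T`.
-/

open scoped Manifold ContDiff

section DifferentialAlgebra

variable {R A : Type*} [CommSemiring R] [CommRing A] [Algebra R A]

/-- The differential polynomial on the right-hand side of the Kupershmidt equation, with an
arbitrary derivation `D` of a commutative ring in place of `∂/∂x`. -/
def kupershmidtFlow (D : Derivation R A A) (k : A) : A :=
  D (D (D (D (D k)))) - 5 * D k * D (D (D k)) - 5 * D (D k) ^ 2 - 5 * k ^ 2 * D (D (D k))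
    - 20 * k * D k * D (D k) - 5 * D k ^ 3 + 5 * k ^ 4 * D k

/-- The differential polynomial on the right-hand side of the Sawada-Kotera equation, with an
arbitrary derivation `D` of a commutative ring in place of `∂/∂x`. -/
def sawadaKoteraFlow (D : Derivation R A A) (s : A) : A :=
  D (D (D (D (D s)))) + 5 * s * D (D (D s)) + 5 * D s * D (D s) + 5 * s ^ 2 * D s

/-- The Miura transformation `k ↦ k_x - k²` of Fordy and Gibbons, with an arbitrary derivation `D`
of a commutative ring in place of `∂/∂x`. -/
def miura (D : Derivation R A A) (k : A) : A :=
  D k - k ^ 2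

variable (D T : Derivation R A A) (k : A)

lemma derivation_map_ofNat (n : ℕ) [n.AtLeastTwo] : D (ofNat(n) : A) = 0 :=
  D.map_natCast n

lemma derivation_map_sq : D (k ^ 2) = 2 * k * D k := by
  simp [D.leibniz_pow, two_mul, add_mul]

lemma derivation_map_miura {k : A} (hcomm : T (D k) = D (T k)) :
    T (miura D k) = D (T k) - 2 * k * T k := by
  rw [miura, map_sub, hcomm, derivation_map_sq]

lemma sawadaKoteraFlow_miura :
    sawadaKoteraFlow D (miura D k) = D (kupershmidtFlow D k) - 2 * k * kupershmidtFlow D k := by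
  have h₁ : D (miura D k) = D (D k) - 2 * k * D k :=
    derivation_map_miura D D rfl
  have h₂ : D (D (miura D k)) = D (D (D k)) - 2 * D k ^ 2 - 2 * k * D (D k) := by
    simp only [h₁, map_sub, D.leibniz, derivation_map_ofNat, smul_eq_mul]
    ring
  have h₃ : D (D (D (miura D k))) =
      D (D (D (D k))) - 6 * D k * D (D k) - 2 * k * D (D (D k)) := by
    simp only [h₂, map_sub, D.leibniz, derivation_map_sq, derivation_map_ofNat, smul_eq_mul]
    ring
  have h₄ : D (D (D (D (miura D k)))) =
      D (D (D (D (D k)))) - 6 * D (D k) ^ 2 - 8 * D k * D (D (D k))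
        - 2 * k * D (D (D (D k))) := by
    simp only [h₃, map_sub, D.leibniz, derivation_map_ofNat, smul_eq_mul]
    ring
  have h₅ : D (D (D (D (D (miura D k))))) =
      D (D (D (D (D (D k))))) - 20 * D (D k) * D (D (D k)) - 10 * D k * D (D (D (D k)))
        - 2 * k * D (D (D (D (D k)))) := by
    simp only [h₄, map_sub, D.leibniz, derivation_map_sq, derivation_map_ofNat, smul_eq_mul]
    ring
  rw [sawadaKoteraFlow, h₅, h₃, h₂, h₁, miura]
  simp only [kupershmidtFlow, map_sub, map_add, D.leibniz, D.leibniz_pow, derivation_map_ofNat,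
    smul_eq_mul, nsmul_eq_mul]
  push_cast
  ring

theorem derivation_map_miura_eq_sawadaKoteraFlow {k : A} (hcomm : T (D k) = D (T k))
    (hk : T k = kupershmidtFlow D k) : T (miura D k) = sawadaKoteraFlow D (miura D k) := by
  rw [derivation_map_miura D T hcomm, hk, sawadaKoteraFlow_miura]

end DifferentialAlgebra

/-- The algebra of smooth scalar functions on a normed space, as an instance of Mathlib's algebra of
smooth functions on a manifold. -/
abbrev SmoothFunction (𝕜 E : Type*) [NontriviallyNormedField 𝕜] [NormedAddCommGroup E]
    [NormedSpace 𝕜 E] : Type _ :=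
  C^∞⟮𝓘(𝕜, E), E; 𝕜⟯

namespace SmoothFunction

section DirectionalDerivative

variable {𝕜 E : Type*} [NontriviallyNormedField 𝕜] [NormedAddCommGroup E] [NormedSpace 𝕜 E]

lemma contDiff (f : SmoothFunction 𝕜 E) : ContDiff 𝕜 ∞ f :=
  f.contMDiff.contDiff

lemma differentiable (f : SmoothFunction 𝕜 E) : Differentiable 𝕜 f :=
  f.contDiff.differentiable (by simp)

lemma contDiff_fderiv (f : SmoothFunction 𝕜 E) : ContDiff 𝕜 ∞ (fderiv 𝕜 f) :=
  f.contDiff.fderiv_right (by simp)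

lemma ofNat_apply (n : ℕ) [n.AtLeastTwo] (p : E) : (ofNat(n) : SmoothFunction 𝕜 E) p = ofNat(n) :=
  map_ofNat (ContMDiffMap.evalRingHom p) n

/-- Differentiation in the constant direction `v`, as a derivation of the algebra of smooth
functions. -/
noncomputable def directionalDeriv (v : E) :
    Derivation 𝕜 (SmoothFunction 𝕜 E) (SmoothFunction 𝕜 E) :=
  Derivation.mk'
    { toFun f := ⟨fun p => fderiv 𝕜 f p v, (f.contDiff_fderiv.clm_apply contDiff_const).contMDiff⟩
      map_add' f g := by
        ext p
        exact DFunLike.congr_fun (fderiv_add (f.differentiable p) (g.differentiable p)) v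
      map_smul' c f := by
        ext p
        exact DFunLike.congr_fun (fderiv_const_smul (f.differentiable p) c) v }
    fun f g => by
      ext p
      exact DFunLike.congr_fun (fderiv_mul (f.differentiable p) (g.differentiable p)) v

lemma directionalDeriv_directionalDeriv_apply (v w : E) (f : SmoothFunction 𝕜 E) (p : E) :
    directionalDeriv v (directionalDeriv w f) p = fderiv 𝕜 (fderiv 𝕜 f) p v w := by
  have hf : DifferentiableAt 𝕜 (fderiv 𝕜 f) p := f.contDiff_fderiv.differentiable (by simp) p
  change fderiv 𝕜 (fun q => fderiv 𝕜 f q w) p v = _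
  simp [fderiv_clm_apply hf (differentiableAt_const w)]

lemma directionalDeriv_comm [IsRCLikeNormedField 𝕜] (v w : E) (f : SmoothFunction 𝕜 E) :
    directionalDeriv v (directionalDeriv w f) = directionalDeriv w (directionalDeriv v f) := by
  ext p
  have hsymm : IsSymmSndFDerivAt 𝕜 f p :=
    (contDiff_infty.1 f.contDiff 2).contDiffAt.isSymmSndFDerivAt (by simp)
  simpa only [directionalDeriv_directionalDeriv_apply] using hsymm v w

end DirectionalDerivative

section Plane

/-- The partial derivative `∂/∂x` on smooth functions of `(x, t)`. -/
noncomputable def partialX : Derivation ℝ (SmoothFunction ℝ (ℝ × ℝ)) (SmoothFunction ℝ (ℝ × ℝ)) :=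
  directionalDeriv (1, 0)

/-- The partial derivative `∂/∂t` on smooth functions of `(x, t)`. -/
noncomputable def partialT : Derivation ℝ (SmoothFunction ℝ (ℝ × ℝ)) (SmoothFunction ℝ (ℝ × ℝ)) :=
  directionalDeriv (0, 1)

variable (f : SmoothFunction ℝ (ℝ × ℝ))

lemma partialT_partialX : partialT (partialX f) = partialX (partialT f) :=
  directionalDeriv_comm (0, 1) (1, 0) f

lemma dx_curry : dx (Function.curry f) = Function.curry (partialX f) := by
  funext x t
  exact ((f.differentiable (x, t)).hasFDerivAt.comp_hasDerivAt x
    ((hasDerivAt_id x).prodMk (hasDerivAt_const x t))).deriv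

lemma dt_curry : dt (Function.curry f) = Function.curry (partialT f) := by
  funext x t
  exact ((f.differentiable (x, t)).hasFDerivAt.comp_hasDerivAt t
    ((hasDerivAt_const t x).prodMk (hasDerivAt_id t))).deriv

lemma kupershmidt_curry_iff :
    Kupershmidt (Function.curry f) ↔ partialT f = kupershmidtFlow partialX f := by
  simp [Kupershmidt, kupershmidtFlow, dx_curry, dt_curry, ContMDiffMap.ext_iff, ofNat_apply]

lemma sawadaKotera_curry_iff :
    SawadaKotera (Function.curry f) ↔ partialT f = sawadaKoteraFlow partialX f := by
  simp [SawadaKotera, sawadaKoteraFlow, dx_curry, dt_curry, ContMDiffMap.ext_iff, ofNat_apply]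

lemma curry_miura :
    Function.curry ⇑(miura partialX f) =
      fun x t => dx (Function.curry f) x t - Function.curry f x t ^ 2 := by
  rw [dx_curry]
  rfl

end Plane

end SmoothFunction

open SmoothFunction

/-- The Miura transformation `S = K_x - K²` maps the Kupershmidt equation to the
Sawada-Kotera equation. -/
theorem miura_kupershmidt_to_sawada_kotera
    (K : ℝ → ℝ → ℝ)
    (hK : ContDiff ℝ (⊤ : ℕ∞) (fun p : ℝ × ℝ => K p.1 p.2))
    (heq : Kupershmidt K) :
    SawadaKotera (fun x t => dx K x t - (K x t)^2) := by
  let k : SmoothFunction ℝ (ℝ × ℝ) := ⟨fun p => K p.1 p.2, hK.contMDiff⟩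
  have hk : partialT k = kupershmidtFlow partialX k := k.kupershmidt_curry_iff.1 heq
  have hmiura : partialT (miura partialX k) = sawadaKoteraFlow partialX (miura partialX k) :=
    derivation_map_miura_eq_sawadaKoteraFlow _ _ k.partialT_partialX hk
  have hS : SawadaKotera (Function.curry ⇑(miura partialX k)) :=
    (sawadaKotera_curry_iff _).2 hmiura
  rwa [curry_miura] at hS
end

section
/- Let u : ℝ → ℝ → ℝ be a smooth function of (x,t) with u_x(x,t) > 0 for all (x,t), satisfying the 2nd potential Kupershmidt equation u_t = u_{5x} - 5·u_{xx}u_{4x}/u_x - (15/4)·u_{xxx}²/u_x + (65/4)·u_{xx}²u_{xxx}/u_x² - (135/16)·u_{xx}⁴/u_x³. Then h := u_x^{-1/2} satisfies h_t = ∂_x[ h_{4x} - 5·h_xh_{xxx}/h + 5·h_x²h_{xx}/h² ], where ∂_x denotes the partial derivative with respect to x of the bracketed expression. -/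
/-- The 2nd potential Kupershmidt equation. -/
def Kup2 (u : ℝ → ℝ → ℝ) : Prop :=
  ∀ x t, dt u x t =
    dx (dx (dx (dx (dx u)))) x t
    - 5 * dx (dx u) x t * dx (dx (dx (dx u))) x t / dx u x t
    - (15/4) * (dx (dx (dx u)) x t)^2 / dx u x t
    + (65/4) * (dx (dx u) x t)^2 * dx (dx (dx u)) x t / (dx u x t)^2
    - (135/16) * (dx (dx u) x t)^4 / (dx u x t)^3

/-!
Substituting `u_x = h⁻²` turns the right-hand side of the 2nd potential Kupershmidt equation into a
rational expression `F` in `h` and its `x`-derivatives, while the 3rd equation reads `h_t = ∂_x G`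
with `G = h_{4x} - 5 h_x h_{xxx} / h + 5 h_x² h_{xx} / h²`. The point is the identity
`∂_x F = -2 h⁻³ ∂_x G`, which says that `h⁻²` is a conserved density of `h_t = ∂_x G`.
Equality of mixed partials then gives
`-2 h⁻³ h_t = ∂_t (h⁻²) = ∂_t u_x = ∂_x u_t = ∂_x F = -2 h⁻³ ∂_x G`, and `-2 h⁻³` cancels.
-/

open Function

section MixedPartials

lemma differentiable_fderiv_of_contDiff_two {𝕜 E F : Type*} [NontriviallyNormedField 𝕜]
    [NormedAddCommGroup E] [NormedSpace 𝕜 E] [NormedAddCommGroup F] [NormedSpace 𝕜 F] {f : E → F}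
    (hf : ContDiff 𝕜 2 f) : Differentiable 𝕜 (fderiv 𝕜 f) :=
  (hf.fderiv_right (m := 1) one_add_one_eq_two.le).differentiable one_ne_zero

variable {f : ℝ → ℝ → ℝ}

lemma dx_eq_fderiv_uncurry {x t : ℝ} (hf : DifferentiableAt ℝ (uncurry f) (x, t)) :
    dx f x t = fderiv ℝ (uncurry f) (x, t) (1, 0) :=
  (hf.hasFDerivAt.comp_hasDerivAt (f := fun y : ℝ => (y, t)) x
    ((hasDerivAt_id x).prodMk (hasDerivAt_const x t))).deriv

lemma dt_eq_fderiv_uncurry {x t : ℝ} (hf : DifferentiableAt ℝ (uncurry f) (x, t)) :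
    dt f x t = fderiv ℝ (uncurry f) (x, t) (0, 1) :=
  (hf.hasFDerivAt.comp_hasDerivAt (f := fun s : ℝ => (x, s)) t
    ((hasDerivAt_const t x).prodMk (hasDerivAt_id t))).deriv

lemma uncurry_dx (hf : Differentiable ℝ (uncurry f)) :
    uncurry (dx f) = fun p => fderiv ℝ (uncurry f) p (1, 0) :=
  funext fun p => dx_eq_fderiv_uncurry (hf p)

lemma uncurry_dt (hf : Differentiable ℝ (uncurry f)) :
    uncurry (dt f) = fun p => fderiv ℝ (uncurry f) p (0, 1) :=
  funext fun p => dt_eq_fderiv_uncurry (hf p)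

lemma differentiable_uncurry_dx (hf : ContDiff ℝ 2 (uncurry f)) :
    Differentiable ℝ (uncurry (dx f)) := by
  rw [uncurry_dx (hf.differentiable two_ne_zero)]
  exact (differentiable_fderiv_of_contDiff_two hf).clm_apply (differentiable_const _)

lemma differentiable_uncurry_dt (hf : ContDiff ℝ 2 (uncurry f)) :
    Differentiable ℝ (uncurry (dt f)) := by
  rw [uncurry_dt (hf.differentiable two_ne_zero)]
  exact (differentiable_fderiv_of_contDiff_two hf).clm_apply (differentiable_const _)

theorem dt_dx_comm (hf : ContDiff ℝ 2 (uncurry f)) : dt (dx f) = dx (dt f) := by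
  funext x t
  have hf₁ : Differentiable ℝ (uncurry f) := hf.differentiable two_ne_zero
  have hf₂ : DifferentiableAt ℝ (fderiv ℝ (uncurry f)) (x, t) :=
    differentiable_fderiv_of_contDiff_two hf _
  have hsymm : IsSymmSndFDerivAt ℝ (uncurry f) (x, t) :=
    hf.contDiffAt.isSymmSndFDerivAt minSmoothness_of_isRCLikeNormedField.le
  rw [dt_eq_fderiv_uncurry (differentiable_uncurry_dx hf _), uncurry_dx hf₁,
    dx_eq_fderiv_uncurry (differentiable_uncurry_dt hf _), uncurry_dt hf₁,
    fderiv_clm_apply hf₂ (differentiableAt_const _),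
    fderiv_clm_apply hf₂ (differentiableAt_const _)]
  simpa using hsymm (0, 1) (1, 0)

end MixedPartials

section ConservationLaw

variable {𝕜 : Type*} [NontriviallyNormedField 𝕜]

lemma hasDerivAt_iteratedDeriv_one {f : 𝕜 → 𝕜} {x : 𝕜} (hf : DifferentiableAt 𝕜 f x) :
    HasDerivAt f (iteratedDeriv 1 f x) x := by
  rw [iteratedDeriv_one]
  exact hf.hasDerivAt

lemma hasDerivAt_iteratedDeriv {f : 𝕜 → 𝕜} {n : WithTop ℕ∞} {k : ℕ} (hf : ContDiff 𝕜 n f)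
    (hk : k < n) (x : 𝕜) : HasDerivAt (iteratedDeriv k f) (iteratedDeriv (k + 1) f x) x := by
  rw [iteratedDeriv_succ]
  exact (hf.differentiable_iteratedDeriv k hk x).hasDerivAt

lemma hasDerivAt_div_pow {f h : 𝕜 → 𝕜} {f' h' x : 𝕜} (hf : HasDerivAt f f' x)
    (hh : HasDerivAt h h' x) (hx : h x ≠ 0) (n : ℕ) :
    HasDerivAt (fun y => f y / h y ^ n) (f' / h x ^ n - n * f x * h' / h x ^ (n + 1)) x := by
  refine (hf.fun_div (hh.fun_pow n) (pow_ne_zero n hx)).congr_deriv ?_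
  cases n with
  | zero => simp
  | succ n => simp only [Nat.add_sub_cancel]; field_simp; ring

lemma hasDerivAt_inv_sq {h : 𝕜 → 𝕜} {h' x : 𝕜} (hh : HasDerivAt h h' x) (hx : h x ≠ 0) :
    HasDerivAt (fun y => (h y ^ 2)⁻¹) (-2 * h' / h x ^ 3) x := by
  refine ((hh.fun_pow 2).fun_inv (pow_ne_zero 2 hx)).congr_deriv ?_
  push_cast
  field_simp

/-- The right-hand side of the 2nd potential Kupershmidt equation, as a differential expression in
`w = u_x`. -/
noncomputable def kup2Rhs (w : 𝕜 → 𝕜) (x : 𝕜) : 𝕜 :=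
  iteratedDeriv 4 w x - 5 * iteratedDeriv 1 w x * iteratedDeriv 3 w x / w x
    - (15 / 4) * iteratedDeriv 2 w x ^ 2 / w x
    + (65 / 4) * iteratedDeriv 1 w x ^ 2 * iteratedDeriv 2 w x / w x ^ 2
    - (135 / 16) * iteratedDeriv 1 w x ^ 4 / w x ^ 3

/-- The right-hand side of the 3rd potential Kupershmidt equation, as a differential expression in
`h = v_x`. -/
noncomputable def kup3Rhs (h : 𝕜 → 𝕜) (x : 𝕜) : 𝕜 :=
  iteratedDeriv 4 h x - 5 * iteratedDeriv 1 h x * iteratedDeriv 3 h x / h x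
    + 5 * iteratedDeriv 1 h x ^ 2 * iteratedDeriv 2 h x / h x ^ 2

variable {h : 𝕜 → 𝕜}

lemma iteratedDeriv_one_inv_sq (hh : Differentiable 𝕜 h) (h_ne : ∀ x, h x ≠ 0) :
    iteratedDeriv 1 (fun x => (h x ^ 2)⁻¹) = fun x => -2 * iteratedDeriv 1 h x / h x ^ 3 := by
  rw [iteratedDeriv_one, iteratedDeriv_one]
  exact funext fun x => (hasDerivAt_inv_sq (hh x).hasDerivAt (h_ne x)).deriv

lemma iteratedDeriv_two_inv_sq (hh : ContDiff 𝕜 2 h) (h_ne : ∀ x, h x ≠ 0) :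
    iteratedDeriv 2 (fun x => (h x ^ 2)⁻¹) = fun x =>
      -2 * iteratedDeriv 2 h x / h x ^ 3 + 6 * iteratedDeriv 1 h x ^ 2 / h x ^ 4 := by
  funext x
  have d₀ := hasDerivAt_iteratedDeriv_one (hh.differentiable (by norm_num) x)
  have d₁ := hasDerivAt_iteratedDeriv hh (k := 1) (by norm_num) x
  rw [iteratedDeriv_succ, iteratedDeriv_one_inv_sq (hh.differentiable two_ne_zero) h_ne]
  refine (hasDerivAt_div_pow (d₁.const_mul (-2)) d₀ (h_ne x) 3).deriv.trans ?_
  push_cast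
  ring

lemma iteratedDeriv_three_inv_sq (hh : ContDiff 𝕜 3 h) (h_ne : ∀ x, h x ≠ 0) :
    iteratedDeriv 3 (fun x => (h x ^ 2)⁻¹) = fun x =>
      -2 * iteratedDeriv 3 h x / h x ^ 3
        + 18 * (iteratedDeriv 1 h x * iteratedDeriv 2 h x) / h x ^ 4
        - 24 * iteratedDeriv 1 h x ^ 3 / h x ^ 5 := by
  funext x
  have d₀ := hasDerivAt_iteratedDeriv_one (hh.differentiable (by norm_num) x)
  have d₁ := hasDerivAt_iteratedDeriv hh (k := 1) (by norm_num) x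
  have d₂ := hasDerivAt_iteratedDeriv hh (k := 2) (by norm_num) x
  rw [iteratedDeriv_succ, iteratedDeriv_two_inv_sq (hh.of_le (by norm_num)) h_ne]
  refine ((hasDerivAt_div_pow (d₂.const_mul (-2)) d₀ (h_ne x) 3).fun_add
    (hasDerivAt_div_pow ((d₁.fun_pow 2).const_mul 6) d₀ (h_ne x) 4)).deriv.trans ?_
  push_cast
  ring

lemma iteratedDeriv_four_inv_sq (hh : ContDiff 𝕜 4 h) (h_ne : ∀ x, h x ≠ 0) :
    iteratedDeriv 4 (fun x => (h x ^ 2)⁻¹) = fun x =>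
      -2 * iteratedDeriv 4 h x / h x ^ 3
        + (24 * iteratedDeriv 1 h x * iteratedDeriv 3 h x + 18 * iteratedDeriv 2 h x ^ 2) / h x ^ 4
        - 144 * iteratedDeriv 1 h x ^ 2 * iteratedDeriv 2 h x / h x ^ 5
        + 120 * iteratedDeriv 1 h x ^ 4 / h x ^ 6 := by
  funext x
  have d₀ := hasDerivAt_iteratedDeriv_one (hh.differentiable (by norm_num) x)
  have d₁ := hasDerivAt_iteratedDeriv hh (k := 1) (by norm_num) x
  have d₂ := hasDerivAt_iteratedDeriv hh (k := 2) (by norm_num) x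
  have d₃ := hasDerivAt_iteratedDeriv hh (k := 3) (by norm_num) x
  rw [iteratedDeriv_succ, iteratedDeriv_three_inv_sq (hh.of_le (by norm_num)) h_ne]
  refine (((hasDerivAt_div_pow (d₃.const_mul (-2)) d₀ (h_ne x) 3).fun_add
    (hasDerivAt_div_pow ((d₁.fun_mul d₂).const_mul 18) d₀ (h_ne x) 4)).fun_sub
    (hasDerivAt_div_pow ((d₁.fun_pow 3).const_mul 24) d₀ (h_ne x) 5)).deriv.trans ?_
  push_cast
  ring

variable [CharZero 𝕜]

lemma kup2Rhs_inv_sq (hh : ContDiff 𝕜 4 h) (h_ne : ∀ x, h x ≠ 0) :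
    kup2Rhs (fun x => (h x ^ 2)⁻¹) = fun x =>
      -2 * iteratedDeriv 4 h x / h x ^ 3
        + (4 * (iteratedDeriv 1 h x * iteratedDeriv 3 h x) + 3 * iteratedDeriv 2 h x ^ 2) / h x ^ 4
        - 4 * (iteratedDeriv 1 h x ^ 2 * iteratedDeriv 2 h x) / h x ^ 5 := by
  funext x
  have hx := h_ne x
  rw [kup2Rhs, iteratedDeriv_one_inv_sq (hh.differentiable four_ne_zero) h_ne,
    iteratedDeriv_two_inv_sq (hh.of_le (by norm_num)) h_ne,
    iteratedDeriv_three_inv_sq (hh.of_le (by norm_num)) h_ne, iteratedDeriv_four_inv_sq hh h_ne]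
  field_simp
  ring

theorem deriv_kup2Rhs_inv_sq (hh : ContDiff 𝕜 5 h) (h_ne : ∀ x, h x ≠ 0) (x : 𝕜) :
    deriv (kup2Rhs fun y => (h y ^ 2)⁻¹) x = -2 / h x ^ 3 * deriv (kup3Rhs h) x := by
  have hx := h_ne x
  have d₀ := hasDerivAt_iteratedDeriv_one (hh.differentiable (by norm_num) x)
  have d₁ := hasDerivAt_iteratedDeriv hh (k := 1) (by norm_num) x
  have d₂ := hasDerivAt_iteratedDeriv hh (k := 2) (by norm_num) x
  have d₃ := hasDerivAt_iteratedDeriv hh (k := 3) (by norm_num) x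
  have d₄ := hasDerivAt_iteratedDeriv hh (k := 4) (by norm_num) x
  have hkup2 : HasDerivAt (kup2Rhs fun y => (h y ^ 2)⁻¹) _ x :=
    kup2Rhs_inv_sq (hh.of_le (by norm_num)) h_ne ▸
      ((hasDerivAt_div_pow (d₄.const_mul (-2)) d₀ hx 3).fun_add
        (hasDerivAt_div_pow (((d₁.fun_mul d₃).const_mul 4).fun_add ((d₂.fun_pow 2).const_mul 3))
          d₀ hx 4)).fun_sub
        (hasDerivAt_div_pow (((d₁.fun_pow 2).fun_mul d₂).const_mul 4) d₀ hx 5)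
  have hkup3 : HasDerivAt (kup3Rhs h) _ x :=
    (d₄.fun_sub (((d₁.const_mul 5).fun_mul d₃).fun_div d₀ hx)).fun_add
      (hasDerivAt_div_pow (((d₁.fun_pow 2).const_mul 5).fun_mul d₂) d₀ hx 2)
  rw [hkup2.deriv, hkup3.deriv]
  push_cast
  field_simp
  ring

end ConservationLaw

lemma Kup2.dt_eq_kup2Rhs {u : ℝ → ℝ → ℝ} (heq : Kup2 u) (x t : ℝ) :
    dt u x t = kup2Rhs (fun y => dx u y t) x := by
  simp only [kup2Rhs, iteratedDeriv_succ, iteratedDeriv_zero]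
  exact heq x t

lemma kup3Rhs_slice (h : ℝ → ℝ → ℝ) (t : ℝ) :
    (kup3Rhs fun y => h y t) = fun x =>
      dx (dx (dx (dx h))) x t - 5 * dx h x t * dx (dx (dx h)) x t / h x t
        + 5 * dx h x t ^ 2 * dx (dx h) x t / h x t ^ 2 := by
  funext x
  simp only [kup3Rhs, iteratedDeriv_succ, iteratedDeriv_zero]
  rfl

lemma inv_sq_rpow_neg_half {a : ℝ} (ha : 0 ≤ a) : ((a ^ (-(1 / 2) : ℝ)) ^ 2)⁻¹ = a := by
  rw [← Real.rpow_mul_natCast ha]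
  norm_num [Real.rpow_neg_one]

theorem Kup2.dt_eq_deriv_kup3Rhs {u h : ℝ → ℝ → ℝ} (heq : Kup2 u)
    (hu : ContDiff ℝ 2 (uncurry u)) (hux : dx u = fun x t => (h x t ^ 2)⁻¹) {x t : ℝ}
    (h_ne : ∀ y, h y t ≠ 0) (h_slice : ContDiff ℝ 5 (fun y => h y t))
    (h_dt : DifferentiableAt ℝ (fun s => h x s) t) :
    dt h x t = deriv (kup3Rhs fun y => h y t) x := by
  have coeff_ne : -2 / h x t ^ 3 ≠ 0 := div_ne_zero (by norm_num) (pow_ne_zero 3 (h_ne x))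
  refine mul_left_cancel₀ coeff_ne ?_
  calc -2 / h x t ^ 3 * dt h x t
      = dt (dx u) x t := by
        rw [hux, dt, dt, (hasDerivAt_inv_sq h_dt.hasDerivAt (h_ne x)).deriv]
        ring
    _ = dx (dt u) x t := by rw [dt_dx_comm hu]
    _ = deriv (kup2Rhs fun y => (h y t ^ 2)⁻¹) x := by
        simp only [dx, heq.dt_eq_kup2Rhs, ← congrFun₂ hux]
    _ = -2 / h x t ^ 3 * deriv (kup3Rhs fun y => h y t) x :=
        deriv_kup2Rhs_inv_sq h_slice h_ne x

theorem kup2_potentialisation_general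
    (u : ℝ → ℝ → ℝ)
    (hu : ContDiff ℝ 2 (uncurry u))
    (hu_slice : ∀ t, ContDiff ℝ 6 (fun x => u x t))
    (hux : ∀ x t, 0 < dx u x t)
    (heq : Kup2 u)
    (h : ℝ → ℝ → ℝ)
    (hh : ∀ x t, h x t = dx u x t ^ (-(1 / 2) : ℝ)) :
    ∀ x t, dt h x t =
      dx (fun x t =>
        dx (dx (dx (dx h))) x t
        - 5 * dx h x t * dx (dx (dx h)) x t / h x t
        + 5 * dx h x t ^ 2 * dx (dx h) x t / h x t ^ 2) x t := by
  intro x t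
  obtain rfl : h = fun x t => dx u x t ^ (-(1 / 2) : ℝ) := funext₂ hh
  have h_slice : ContDiff ℝ 5 (fun y => dx u y t ^ (-(1 / 2) : ℝ)) :=
    (ContDiff.deriv' (n := 5) (hu_slice t)).rpow_const_of_ne fun y => (hux y t).ne'
  have h_dt : DifferentiableAt ℝ (fun s => dx u x s ^ (-(1 / 2) : ℝ)) t :=
    ((differentiable_uncurry_dx hu (x, t)).comp t (f := fun s => (x, s))
      (by fun_prop)).rpow_const (.inl (hux x t).ne')
  rw [heq.dt_eq_deriv_kup3Rhs hu (funext₂ fun y s => (inv_sq_rpow_neg_half (hux y s).le).symm)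
    (fun y => (Real.rpow_pos_of_pos (hux y t) _).ne') h_slice h_dt, kup3Rhs_slice]
  rfl

/-- If `u` solves the 2nd potential Kupershmidt equation with `u_x > 0`, then
`h = u_x^{-1/2}` solves the `x`-differentiated 3rd potential Kupershmidt equation. -/
theorem kup2_potentialisation
    (u : ℝ → ℝ → ℝ)
    (hu : ContDiff ℝ (⊤ : ℕ∞) (fun p : ℝ × ℝ => u p.1 p.2))
    (hux : ∀ x t, 0 < dx u x t)
    (heq : Kup2 u)
    (h : ℝ → ℝ → ℝ)
    (hh : ∀ x t, h x t = (dx u x t) ^ (-(1/2) : ℝ)) :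
    ∀ x t, dt h x t =
      dx (fun x t =>
        dx (dx (dx (dx h))) x t
        - 5 * dx h x t * dx (dx (dx h)) x t / h x t
        + 5 * (dx h x t)^2 * dx (dx h) x t / (h x t)^2) x t :=
  kup2_potentialisation_general u (mod_cast contDiff_infty.1 hu 2)
    (fun t => mod_cast contDiff_infty.1 (hu.comp (contDiff_prodMk_left t)) 6) hux heq h hh
end

section
/- Let v : ℝ → ℝ → ℝ be a smooth function of (x,t) with v_x(x,t) ≠ 0 for all (x,t), satisfying the 3rd potential Kupershmidt equation v_t = v_{5x} - 5·v_{xx}v_{4x}/v_x + 5·v_{xx}²v_{xxx}/v_x². Then h := v_x^{-2} satisfies h_t = ∂_x[ h_{4x} - 5·h_xh_{xxx}/h - (15/4)·h_{xx}²/h + (65/4)·h_x²h_{xx}/h² - (135/16)·h_x⁴/h³ ], where ∂_x denotes the partial derivative with respect to x of the bracketed expression. -/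
/-- The 3rd potential Kupershmidt equation. -/
def Kup3 (v : ℝ → ℝ → ℝ) : Prop :=
  ∀ x t, dt v x t =
    dx (dx (dx (dx (dx v)))) x t
    - 5 * dx (dx v) x t * dx (dx (dx (dx v))) x t / dx v x t
    + 5 * (dx (dx v) x t)^2 * dx (dx (dx v)) x t / (dx v x t)^2

/-!
Put `p = v_x` and let `w = p_x / p`. Differentiating a product `p * q` with `p_x = p * w` amounts to
applying `∂ + w` to `q`, so every `x`-derivative of `p` is `p` times a differential polynomial in
`w`, and likewise for `h = p⁻²` with `-2 * w` in place of `w`. In these terms both equations are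
governed by the same expression `F(w) = w₄ + 5 w₁ w₂ - 5 w² w₂ - 5 w w₁² + w⁵`, the flux of the
Kupershmidt equation `w_t = ∂ F(w)`: the `x`-derivative of the right-hand side of the equation for
`v` is `p * F(w)`, and that of the bracket for `h` is `-2 * h * F(w)`. Since mixed partial
derivatives commute, `p_t = p * F(w)`, whence `h_t = -2 * h * p_t / p = -2 * h * F(w)`.
-/

section Flux

variable {𝕜 : Type*} [NontriviallyNormedField 𝕜] {p h w q : 𝕜 → 𝕜}

/-- The flux `F(w)` of the Kupershmidt equation `w_t = ∂ F(w)`. -/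
noncomputable def kupershmidtFlux (w : 𝕜 → 𝕜) (x : 𝕜) : 𝕜 :=
  deriv^[4] w x + 5 * deriv w x * deriv^[2] w x - 5 * w x ^ 2 * deriv^[2] w x
    - 5 * w x * deriv w x ^ 2 + w x ^ 5

/-- The right-hand side of the 3rd potential Kupershmidt equation for `v`, as a function of
`p = v_x` at a fixed time. At fixed time, iterated `dx` unfold definitionally
to iterated `deriv`. -/
noncomputable def kup3Flux (p : 𝕜 → 𝕜) (x : 𝕜) : 𝕜 :=
  deriv^[4] p x - 5 * deriv p x * deriv^[3] p x / p x + 5 * deriv p x ^ 2 * deriv^[2] p x / p x ^ 2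

/-- The right-hand side of the 2nd potential Kupershmidt equation for `u`, as a function of
`h = u_x` at a fixed time. -/
noncomputable def kup2Flux (h : 𝕜 → 𝕜) (x : 𝕜) : 𝕜 :=
  deriv^[4] h x - 5 * deriv h x * deriv^[3] h x / h x - (15/4) * deriv^[2] h x ^ 2 / h x
    + (65/4) * deriv h x ^ 2 * deriv^[2] h x / h x ^ 2 - (135/16) * deriv h x ^ 4 / h x ^ 3

lemma hasDerivAt_iterate_deriv {n k : ℕ} (hw : ContDiff 𝕜 n w) (hk : k < n) (x : 𝕜) :
    HasDerivAt (deriv^[k] w) (deriv^[k + 1] w x) x := by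
  have hw' : ContDiff 𝕜 (1 : ℕ) (deriv^[k] w) :=
    ContDiff.iterate_deriv' 1 k (hw.of_le (by exact_mod_cast (by lia : 1 + k ≤ n)))
  rw [Function.iterate_succ_apply']
  exact (hw'.differentiable (by simp) x).hasDerivAt

lemma hasDerivAt_mul_of_hasDerivAt_mul_self {c q' x : 𝕜} (hp : HasDerivAt p (p x * c) x)
    (hq : HasDerivAt q q' x) :
    HasDerivAt (fun y => p y * q y) (p x * (q' + c * q x)) x :=
  (hp.fun_mul hq).congr_deriv (by ring)

lemma deriv_eq_of_hasDerivAt_mul_self (hp : ∀ x, HasDerivAt p (p x * w x) x) :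
    deriv p = fun x => p x * w x :=
  funext fun x => (hp x).deriv

lemma iterate_deriv_two_of_hasDerivAt_mul_self (hp : ∀ x, HasDerivAt p (p x * w x) x)
    (hw : ContDiff 𝕜 1 w) :
    deriv^[2] p = fun x => p x * (deriv w x + w x ^ 2) := by
  funext x
  have hw₀ := hasDerivAt_iterate_deriv (k := 0) hw (by simp) x
  rw [Function.iterate_succ_apply', Function.iterate_one, deriv_eq_of_hasDerivAt_mul_self hp]
  refine ((hasDerivAt_mul_of_hasDerivAt_mul_self (hp x) hw₀).congr_deriv ?_).deriv
  simp only [Function.iterate_zero, Function.iterate_one, id, zero_add]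
  ring

lemma iterate_deriv_three_of_hasDerivAt_mul_self (hp : ∀ x, HasDerivAt p (p x * w x) x)
    (hw : ContDiff 𝕜 2 w) :
    deriv^[3] p = fun x => p x * (deriv^[2] w x + 3 * w x * deriv w x + w x ^ 3) := by
  funext x
  have hw₀ := hasDerivAt_iterate_deriv (k := 0) hw (by simp) x
  have hw₁ := hasDerivAt_iterate_deriv (k := 1) hw (by simp) x
  rw [Function.iterate_succ_apply',
    iterate_deriv_two_of_hasDerivAt_mul_self hp (hw.of_le (by norm_num))]
  refine ((hasDerivAt_mul_of_hasDerivAt_mul_self (hp x)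
    (hw₁.fun_add (hw₀.fun_pow 2))).congr_deriv ?_).deriv
  simp only [Function.iterate_zero, Function.iterate_one, id, zero_add]
  ring

lemma iterate_deriv_four_of_hasDerivAt_mul_self (hp : ∀ x, HasDerivAt p (p x * w x) x)
    (hw : ContDiff 𝕜 3 w) :
    deriv^[4] p = fun x => p x * (deriv^[3] w x + 4 * w x * deriv^[2] w x + 3 * deriv w x ^ 2
      + 6 * w x ^ 2 * deriv w x + w x ^ 4) := by
  funext x
  have hw₀ := hasDerivAt_iterate_deriv (k := 0) hw (by simp) x
  have hw₁ := hasDerivAt_iterate_deriv (k := 1) hw (by simp) x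
  have hw₂ := hasDerivAt_iterate_deriv (k := 2) hw (by simp) x
  rw [Function.iterate_succ_apply',
    iterate_deriv_three_of_hasDerivAt_mul_self hp (hw.of_le (by norm_num))]
  refine ((hasDerivAt_mul_of_hasDerivAt_mul_self (hp x)
    ((hw₂.fun_add ((hw₀.const_mul 3).fun_mul hw₁)).fun_add (hw₀.fun_pow 3))).congr_deriv ?_).deriv
  simp only [Function.iterate_zero, Function.iterate_one, id, zero_add]
  ring

lemma kup3Flux_eq (hp : ∀ x, HasDerivAt p (p x * w x) x) (hp₀ : ∀ x, p x ≠ 0)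
    (hw : ContDiff 𝕜 3 w) :
    kup3Flux p = fun x => p x * (deriv^[3] w x - w x * deriv^[2] w x + 3 * deriv w x ^ 2
      - 4 * w x ^ 2 * deriv w x + w x ^ 4) := by
  funext x
  have := hp₀ x
  rw [kup3Flux, deriv_eq_of_hasDerivAt_mul_self hp,
    iterate_deriv_two_of_hasDerivAt_mul_self hp (hw.of_le (by norm_num)),
    iterate_deriv_three_of_hasDerivAt_mul_self hp (hw.of_le (by norm_num)),
    iterate_deriv_four_of_hasDerivAt_mul_self hp hw]
  field_simp
  ring

theorem deriv_kup3Flux (hp : ∀ x, HasDerivAt p (p x * w x) x) (hp₀ : ∀ x, p x ≠ 0)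
    (hw : ContDiff 𝕜 4 w) (x : 𝕜) :
    deriv (kup3Flux p) x = p x * kupershmidtFlux w x := by
  have hw₀ := hasDerivAt_iterate_deriv (k := 0) hw (by simp) x
  have hw₁ := hasDerivAt_iterate_deriv (k := 1) hw (by simp) x
  have hw₂ := hasDerivAt_iterate_deriv (k := 2) hw (by simp) x
  have hw₃ := hasDerivAt_iterate_deriv (k := 3) hw (by simp) x
  rw [kup3Flux_eq hp hp₀ (hw.of_le (by norm_num))]
  refine ((hasDerivAt_mul_of_hasDerivAt_mul_self (hp x)
    ((((hw₃.fun_sub (hw₀.fun_mul hw₂)).fun_add ((hw₁.fun_pow 2).const_mul 3)).fun_sub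
      (((hw₀.fun_pow 2).const_mul 4).fun_mul hw₁)).fun_add (hw₀.fun_pow 4))).congr_deriv ?_).deriv
  simp only [kupershmidtFlux, Function.iterate_zero, Function.iterate_one, id, zero_add]
  ring

lemma kup2Flux_eq [CharZero 𝕜] (hh : ∀ x, HasDerivAt h (h x * (-2 * w x)) x)
    (hh₀ : ∀ x, h x ≠ 0) (hw : ContDiff 𝕜 3 w) :
    kup2Flux h = fun x => h x * (-2 * deriv^[3] w x - 4 * w x * deriv^[2] w x - 3 * deriv w x ^ 2
      + 2 * w x ^ 2 * deriv w x + w x ^ 4) := by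
  funext x
  have := hh₀ x
  have hk : ContDiff 𝕜 3 (fun y => -2 * w y) := contDiff_const.mul hw
  rw [kup2Flux, deriv_eq_of_hasDerivAt_mul_self hh,
    iterate_deriv_two_of_hasDerivAt_mul_self hh (hk.of_le (by norm_num)),
    iterate_deriv_three_of_hasDerivAt_mul_self hh (hk.of_le (by norm_num)),
    iterate_deriv_four_of_hasDerivAt_mul_self hh hk]
  simp only [Function.iterate_succ_apply, Function.iterate_zero, id, deriv_const_mul_field']
  field_simp
  ring

theorem deriv_kup2Flux [CharZero 𝕜] (hh : ∀ x, HasDerivAt h (h x * (-2 * w x)) x)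
    (hh₀ : ∀ x, h x ≠ 0) (hw : ContDiff 𝕜 4 w) (x : 𝕜) :
    deriv (kup2Flux h) x = -2 * h x * kupershmidtFlux w x := by
  have hw₀ := hasDerivAt_iterate_deriv (k := 0) hw (by simp) x
  have hw₁ := hasDerivAt_iterate_deriv (k := 1) hw (by simp) x
  have hw₂ := hasDerivAt_iterate_deriv (k := 2) hw (by simp) x
  have hw₃ := hasDerivAt_iterate_deriv (k := 3) hw (by simp) x
  rw [kup2Flux_eq hh hh₀ (hw.of_le (by norm_num))]
  refine ((hasDerivAt_mul_of_hasDerivAt_mul_self (hh x)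
    (((((hw₃.const_mul (-2)).fun_sub ((hw₀.const_mul 4).fun_mul hw₂)).fun_sub
      ((hw₁.fun_pow 2).const_mul 3)).fun_add (((hw₀.fun_pow 2).const_mul 2).fun_mul hw₁)).fun_add
      (hw₀.fun_pow 4))).congr_deriv ?_).deriv
  simp only [kupershmidtFlux, Function.iterate_zero, Function.iterate_one, id, zero_add]
  ring

lemma hasDerivAt_mul_logDeriv {x : 𝕜} (hp : DifferentiableAt 𝕜 p x) (hp₀ : p x ≠ 0) :
    HasDerivAt p (p x * logDeriv p x) x :=
  hp.hasDerivAt.congr_deriv (by rw [logDeriv_apply, mul_div_cancel₀ _ hp₀])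

lemma contDiff_logDeriv {n : WithTop ℕ∞} (hp : ContDiff 𝕜 (n + 1) p) (hp₀ : ∀ x, p x ≠ 0) :
    ContDiff 𝕜 n (logDeriv p) :=
  (contDiff_succ_iff_deriv.mp hp).2.2.div (hp.of_le le_self_add) hp₀

lemma hasDerivAt_zpow_of_hasDerivAt_mul_self {c x : 𝕜} (n : ℤ) (hp : HasDerivAt p (p x * c) x)
    (hp₀ : p x ≠ 0) :
    HasDerivAt (fun y => p y ^ n) (p x ^ n * (n * c)) x := by
  refine ((hasDerivAt_zpow n (p x) (.inl hp₀)).comp x hp).congr_deriv ?_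
  rw [zpow_sub_one₀ hp₀]
  field_simp

theorem deriv_kup3Flux_eq_mul_kupershmidtFlux_logDeriv (hp : ContDiff 𝕜 5 p) (hp₀ : ∀ x, p x ≠ 0)
    (x : 𝕜) :
    deriv (kup3Flux p) x = p x * kupershmidtFlux (logDeriv p) x :=
  deriv_kup3Flux (fun y => hasDerivAt_mul_logDeriv (hp.differentiable (by simp) y) (hp₀ y)) hp₀
    (contDiff_logDeriv hp hp₀) x

theorem deriv_kup2Flux_zpow_neg_two [CharZero 𝕜] (hp : ContDiff 𝕜 5 p) (hp₀ : ∀ x, p x ≠ 0)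
    (x : 𝕜) :
    deriv (kup2Flux fun y => p y ^ (-2 : ℤ)) x =
      -2 * p x ^ (-2 : ℤ) * kupershmidtFlux (logDeriv p) x := by
  refine deriv_kup2Flux (fun y => ?_) (fun y => zpow_ne_zero _ (hp₀ y))
    (contDiff_logDeriv hp hp₀) x
  have hpy : HasDerivAt p (p y * logDeriv p y) y :=
    hasDerivAt_mul_logDeriv (hp.differentiable (by simp) y) (hp₀ y)
  exact mod_cast hasDerivAt_zpow_of_hasDerivAt_mul_self (-2) hpy (hp₀ y)

end Flux

section PartialDerivatives

variable {f : ℝ → ℝ → ℝ}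

lemma dx_eq_fderiv (hf : Differentiable ℝ fun z : ℝ × ℝ => f z.1 z.2) (x t : ℝ) :
    dx f x t = fderiv ℝ (fun z : ℝ × ℝ => f z.1 z.2) (x, t) (1, 0) := by
  have hline : HasDerivAt (fun y : ℝ => (y, t)) ((1 : ℝ), (0 : ℝ)) x :=
    (hasDerivAt_id x).prodMk (hasDerivAt_const x t)
  exact ((hf (x, t)).hasFDerivAt.comp_hasDerivAt x hline).deriv

lemma hasDerivAt_dt (hf : Differentiable ℝ fun z : ℝ × ℝ => f z.1 z.2) (x t : ℝ) :
    HasDerivAt (fun s => f x s) (dt f x t) t :=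
  (hf.comp (differentiable_const x |>.prodMk differentiable_id) t).hasDerivAt

lemma dt_eq_fderiv (hf : Differentiable ℝ fun z : ℝ × ℝ => f z.1 z.2) (x t : ℝ) :
    dt f x t = fderiv ℝ (fun z : ℝ × ℝ => f z.1 z.2) (x, t) (0, 1) := by
  have hline : HasDerivAt (fun s : ℝ => (x, s)) ((0 : ℝ), (1 : ℝ)) t :=
    (hasDerivAt_const t x).prodMk (hasDerivAt_id t)
  exact ((hf (x, t)).hasFDerivAt.comp_hasDerivAt t hline).deriv

lemma contDiff_dx {n : WithTop ℕ∞} (hf : ContDiff ℝ (n + 1) fun z : ℝ × ℝ => f z.1 z.2) :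
    ContDiff ℝ n fun z : ℝ × ℝ => dx f z.1 z.2 := by
  simp only [dx_eq_fderiv (hf.differentiable (by simp))]
  exact (hf.fderiv_right le_rfl).clm_apply contDiff_const

lemma contDiff_dx_slice {n : WithTop ℕ∞} (hf : ContDiff ℝ (n + 1) fun z : ℝ × ℝ => f z.1 z.2)
    (t : ℝ) : ContDiff ℝ n fun x => dx f x t :=
  (contDiff_dx hf).comp (contDiff_id.prodMk contDiff_const)

lemma contDiff_dt {n : WithTop ℕ∞} (hf : ContDiff ℝ (n + 1) fun z : ℝ × ℝ => f z.1 z.2) :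
    ContDiff ℝ n fun z : ℝ × ℝ => dt f z.1 z.2 := by
  simp only [dt_eq_fderiv (hf.differentiable (by simp))]
  exact (hf.fderiv_right le_rfl).clm_apply contDiff_const

theorem dt_dx_comm_s12 (hf : ContDiff ℝ 2 fun z : ℝ × ℝ => f z.1 z.2) (x t : ℝ) :
    dt (dx f) x t = dx (dt f) x t := by
  set F : ℝ × ℝ → ℝ := fun z => f z.1 z.2
  have hF : Differentiable ℝ F := hf.differentiable (by simp)
  have hF' : DifferentiableAt ℝ (fderiv ℝ F) (x, t) :=
    (hf.fderiv_right (m := 1) (by norm_num)).differentiable (by simp) (x, t)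
  have fderiv_fderiv_apply (a b : ℝ × ℝ) :
      fderiv ℝ (fun z => fderiv ℝ F z a) (x, t) b = fderiv ℝ (fderiv ℝ F) (x, t) b a := by
    simp [fderiv_clm_apply hF' (differentiableAt_const a)]
  have hdx : Differentiable ℝ fun z : ℝ × ℝ => dx f z.1 z.2 :=
    (contDiff_dx (n := 1) hf).differentiable (by simp)
  have hdt : Differentiable ℝ fun z : ℝ × ℝ => dt f z.1 z.2 :=
    (contDiff_dt (n := 1) hf).differentiable (by simp)
  rw [dt_eq_fderiv hdx, dx_eq_fderiv hdt]
  simp only [dx_eq_fderiv hF, dt_eq_fderiv hF]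
  rw [fderiv_fderiv_apply, fderiv_fderiv_apply]
  exact hf.contDiffAt.isSymmSndFDerivAt (by simp) _ _

end PartialDerivatives

section Kupershmidt

variable {v : ℝ → ℝ → ℝ}

theorem dt_dx_of_kup3 (hv : ContDiff ℝ 6 fun z : ℝ × ℝ => v z.1 z.2) (hvx : ∀ x t, dx v x t ≠ 0)
    (heq : Kup3 v) (x t : ℝ) :
    dt (dx v) x t = dx v x t * kupershmidtFlux (logDeriv fun y => dx v y t) x :=
  calc dt (dx v) x t = dx (dt v) x t := dt_dx_comm_s12 (hv.of_le (by norm_num)) x t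
    _ = deriv (kup3Flux fun y => dx v y t) x := congrArg (deriv · x) (funext fun y => heq y t)
    _ = dx v x t * kupershmidtFlux (logDeriv fun y => dx v y t) x :=
      deriv_kup3Flux_eq_mul_kupershmidtFlux_logDeriv (contDiff_dx_slice hv t) (hvx · t) x

theorem kup3_potentialisation_general (hv : ContDiff ℝ 6 fun z : ℝ × ℝ => v z.1 z.2)
    (hvx : ∀ x t, dx v x t ≠ 0) (heq : Kup3 v) {h : ℝ → ℝ → ℝ}
    (hh : ∀ x t, h x t = dx v x t ^ (-2 : ℤ)) (x t : ℝ) :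
    dt h x t = deriv (kup2Flux fun y => h y t) x := by
  obtain rfl : h = fun x t => dx v x t ^ (-2 : ℤ) := funext₂ hh
  set w : ℝ → ℝ := logDeriv fun y => dx v y t
  have hvxt : HasDerivAt (fun s => dx v x s) (dx v x t * kupershmidtFlux w x) t := by
    rw [← dt_dx_of_kup3 hv hvx heq]
    exact hasDerivAt_dt ((contDiff_dx (n := 5) hv).differentiable (by simp)) x t
  calc deriv (fun s => dx v x s ^ (-2 : ℤ)) t
    _ = dx v x t ^ (-2 : ℤ) * ((-2 : ℤ) * kupershmidtFlux w x) :=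
      (hasDerivAt_zpow_of_hasDerivAt_mul_self (-2) hvxt (hvx x t)).deriv
    _ = -2 * dx v x t ^ (-2 : ℤ) * kupershmidtFlux w x := by push_cast; ring
    _ = deriv (kup2Flux fun y => dx v y t ^ (-2 : ℤ)) x :=
      (deriv_kup2Flux_zpow_neg_two (contDiff_dx_slice hv t) (hvx · t) x).symm

end Kupershmidt

/-- If `v` solves the 3rd potential Kupershmidt equation, then `h = v_x^{-2}` solves
the `x`-differentiated 2nd potential Kupershmidt equation. -/
theorem kup3_potentialisation
    (v : ℝ → ℝ → ℝ)
    (hv : ContDiff ℝ (⊤ : ℕ∞) (fun p : ℝ × ℝ => v p.1 p.2))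
    (hvx : ∀ x t, dx v x t ≠ 0)
    (heq : Kup3 v)
    (h : ℝ → ℝ → ℝ)
    (hh : ∀ x t, h x t = (dx v x t) ^ (-2 : ℤ)) :
    ∀ x t, dt h x t =
      dx (fun x t =>
        dx (dx (dx (dx h))) x t
        - 5 * dx h x t * dx (dx (dx h)) x t / h x t
        - (15/4) * (dx (dx h) x t)^2 / h x t
        + (65/4) * (dx h x t)^2 * dx (dx h) x t / (h x t)^2
        - (135/16) * (dx h x t)^4 / (h x t)^3) x t :=
  kup3_potentialisation_general (contDiff_infty.mp hv 6) hvx heq hh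
end
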